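/- For σ > 0, define k : ℝ → ℝ by k(r) = e^{−r²/(2σ²)} − √π · (|r|/(σ√2)) · erfc(|r|/(σ√2)), where erfc(x) = (2/√π) ∫_x^∞ e^{−t²} dt. Then for every t ≠ 0: ∫_ℝ k(r) e^{i r t} dr = (√(2π)/(σ t²)) · (1 − e^{−σ² t²/2}). -/

import Mathlib

open MeasureTheory Real

/-- The complementary error function `erfc(x) = (2/√π) ∫_x^∞ e^{-t²} dt`. -/
noncomputable def erfc (x : ℝ) : ℝ :=
  (2 / Real.sqrt π) * ∫ t in Set.Ioi x, Real.exp (-t ^ 2)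

/-!
The Pólya kernel of a density `f` is a mixture, over scales `x` weighted by `f`, of the triangular
functions `r ↦ max 0 (1 - |r| / x)`. By Fubini its Fourier transform is the same mixture of the
transforms `2 (1 - cos (x t)) / (x t²)` of the triangles. For the Rayleigh density the factor
`1 / x` cancels against the factor `x` of the density, and what is left is the Gaussian cosine
integral.
-/

open Set

lemma integral_comp_div_mul_cexp (φ : ℝ → ℂ) {x : ℝ} (hx : 0 < x) (t : ℝ) :
    ∫ r : ℝ, φ (r / x) * Complex.exp (Complex.I * r * t)
      = x * ∫ u : ℝ, φ u * Complex.exp (Complex.I * u * (x * t : ℝ)) := by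
  have scale := Measure.integral_comp_div
    (fun u : ℝ => φ u * Complex.exp (Complex.I * u * (x * t : ℝ))) x
  rw [abs_of_pos hx, Complex.real_smul] at scale
  rw [← scale]
  have hx' : (x : ℂ) ≠ 0 := Complex.ofReal_ne_zero.2 hx.ne'
  congr with r
  congr 2
  push_cast
  field_simp

section ScaleMixture

variable {φ f : ℝ → ℂ}

lemma integrable_prod_comp_div_mul (hφ : Measurable φ) (hφi : Integrable φ)
    (hf : IntegrableOn (fun x : ℝ => x * f x) (Ioi 0)) :
    Integrable (fun p : ℝ × ℝ => φ (p.2 / p.1) * f p.1)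
      ((volume.restrict (Ioi 0)).prod volume) := by
  have f_meas : AEStronglyMeasurable f (volume.restrict (Ioi 0)) := by
    have x_inv_meas : AEStronglyMeasurable (fun x : ℝ => (x : ℂ)⁻¹) (volume.restrict (Ioi 0)) :=
      (by fun_prop : Measurable fun x : ℝ => (x : ℂ)⁻¹).aestronglyMeasurable
    refine (x_inv_meas.mul hf.aestronglyMeasurable).congr ?_
    filter_upwards [ae_restrict_mem measurableSet_Ioi] with x hx
    exact inv_mul_cancel_left₀ (Complex.ofReal_ne_zero.2 (ne_of_gt hx)) (f x)
  have meas : AEStronglyMeasurable (fun p : ℝ × ℝ => φ (p.2 / p.1) * f p.1)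
      ((volume.restrict (Ioi 0)).prod volume) :=
    (hφ.comp (measurable_snd.div measurable_fst)).aestronglyMeasurable.mul f_meas.comp_fst
  refine (integrable_prod_iff meas).2 ⟨?_, ?_⟩
  · filter_upwards [ae_restrict_mem measurableSet_Ioi] with x hx
    exact (hφi.comp_div (ne_of_gt hx)).mul_const (f x)
  · refine (hf.norm.mul_const (∫ u, ‖φ u‖)).congr (.of_forall fun x => ?_)
    simp only [norm_mul, integral_mul_const, Measure.integral_comp_div (fun u => ‖φ u‖) x,
      smul_eq_mul, Complex.norm_real, norm_eq_abs]
    ring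

lemma integral_scale_mixture_mul_cexp (hφ : Measurable φ) (hφi : Integrable φ)
    (hf : IntegrableOn (fun x : ℝ => x * f x) (Ioi 0)) (t : ℝ) :
    ∫ r : ℝ, (∫ x in Ioi (0 : ℝ), φ (r / x) * f x) * Complex.exp (Complex.I * r * t)
      = ∫ x in Ioi (0 : ℝ),
          x * f x * ∫ u : ℝ, φ u * Complex.exp (Complex.I * u * (x * t : ℝ)) := by
  have integrable : Integrable
      (fun p : ℝ × ℝ => φ (p.2 / p.1) * f p.1 * Complex.exp (Complex.I * p.2 * t))
      ((volume.restrict (Ioi 0)).prod volume) := by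
    refine (integrable_prod_comp_div_mul hφ hφi hf).mul_bdd (c := 1)
      (by fun_prop : Continuous _).aestronglyMeasurable (.of_forall fun p => ?_)
    rw [mul_assoc, ← Complex.ofReal_mul, Complex.norm_exp_I_mul_ofReal]
  simp only [← integral_mul_const]
  rw [← integral_integral_swap integrable]
  refine setIntegral_congr_fun measurableSet_Ioi fun x hx => ?_
  calc ∫ r : ℝ, φ (r / x) * f x * Complex.exp (Complex.I * r * t)
      = f x * ∫ r : ℝ, φ (r / x) * Complex.exp (Complex.I * r * t) := by
        rw [← integral_const_mul]
        congr with r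
        ring
    _ = x * f x * ∫ u : ℝ, φ u * Complex.exp (Complex.I * u * (x * t : ℝ)) := by
        rw [integral_comp_div_mul_cexp φ hx t]
        ring

end ScaleMixture

lemma integral_comp_abs_mul_cexp {g : ℝ → ℝ} (hg : Integrable fun r => g |r|) (t : ℝ) :
    ∫ r : ℝ, (g |r| : ℂ) * Complex.exp (Complex.I * r * t)
      = ((2 * ∫ r in Ioi 0, g r * cos (t * r) : ℝ) : ℂ) := by
  have integrable : Integrable fun r : ℝ => (g |r| : ℂ) * Complex.exp (Complex.I * r * t) := by
    refine hg.ofReal.mul_bdd (c := 1) (by fun_prop : Continuous _).aestronglyMeasurable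
      (.of_forall fun r => ?_)
    rw [mul_assoc, ← Complex.ofReal_mul, Complex.norm_exp_I_mul_ofReal]
  have symmetrized (r : ℝ) : (g |r| : ℂ) * Complex.exp (Complex.I * r * t)
      + (g |-r| : ℂ) * Complex.exp (Complex.I * (-r : ℝ) * t)
      = ((2 * (g |r| * cos (t * |r|)) : ℝ) : ℂ) := by
    have cos_abs_mul : cos (t * |r|) = cos (t * r) := by
      rcases abs_choice r with h | h <;> simp [h]
    rw [abs_neg, cos_abs_mul, ← mul_add]
    push_cast
    rw [mul_left_comm, Complex.two_cos]
    ring_nf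
  refine mul_left_cancel₀ (two_ne_zero (α := ℂ)) ?_
  calc 2 * ∫ r : ℝ, (g |r| : ℂ) * Complex.exp (Complex.I * r * t)
      = ∫ r : ℝ, ((g |r| : ℂ) * Complex.exp (Complex.I * r * t)
          + (g |-r| : ℂ) * Complex.exp (Complex.I * (-r : ℝ) * t)) := by
        rw [integral_add integrable integrable.comp_neg, integral_neg_eq_self
          (fun r : ℝ => (g |r| : ℂ) * Complex.exp (Complex.I * r * t)) volume, two_mul]
    _ = 2 * ((2 * ∫ r in Ioi 0, g r * cos (t * r) : ℝ) : ℂ) := by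
        simp only [symmetrized]
        rw [integral_complex_ofReal, integral_const_mul,
          integral_comp_abs (f := fun r => g r * cos (t * r)), Complex.ofReal_mul 2,
          Complex.ofReal_ofNat]

lemma integral_exp_neg_mul_sq_mul_cos_Ioi {b : ℝ} (hb : 0 < b) (t : ℝ) :
    ∫ x in Ioi 0, exp (-b * x ^ 2) * cos (t * x) = √(π / b) / 2 * exp (-(t ^ 2 / (4 * b))) := by
  have even := integral_comp_abs_mul_cexp (g := fun x => exp (-b * x ^ 2))
    (by simpa only [sq_abs] using integrable_exp_neg_mul_sq hb) t
  have fourier := fourierIntegral_gaussian (b := b) (by simpa using hb) t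
  have sqrt_eq : ((π : ℂ) / b) ^ (1 / 2 : ℂ) = (√(π / b) : ℝ) := by
    rw [sqrt_eq_rpow, Complex.ofReal_cpow (by positivity)]
    push_cast
    rfl
  have key : ((2 * ∫ x in Ioi 0, exp (-b * x ^ 2) * cos (t * x) : ℝ) : ℂ)
      = (√(π / b) * exp (-(t ^ 2 / (4 * b))) : ℝ) := by
    rw [← even]
    push_cast
    rw [← sqrt_eq, ← neg_div, ← fourier]
    congr with x
    rw [← Complex.ofReal_pow, sq_abs, Complex.ofReal_pow, mul_comm, mul_right_comm Complex.I]
  linarith [Complex.ofReal_injective key]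

/-- The triangular function supported on `[-1, 1]`. -/
noncomputable def triangle (u : ℝ) : ℝ := max 0 (1 - |u|)

lemma continuous_triangle : Continuous triangle := by
  unfold triangle
  fun_prop

lemma triangle_eq_zero {u : ℝ} (hu : 1 ≤ |u|) : triangle u = 0 :=
  max_eq_left (sub_nonpos.2 hu)

lemma triangle_eq_one_sub_abs {u : ℝ} (hu : |u| ≤ 1) : triangle u = 1 - |u| :=
  max_eq_right (sub_nonneg.2 hu)

lemma integrable_triangle : Integrable triangle := by
  refine continuous_triangle.integrable_of_hasCompactSupport
    (HasCompactSupport.intro (isCompact_Icc (a := -1) (b := 1)) fun u hu => ?_)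
  exact triangle_eq_zero (not_le.1 (mt abs_le.1 hu)).le

lemma integral_one_sub_mul_cos {t : ℝ} (ht : t ≠ 0) :
    ∫ u in (0 : ℝ)..1, (1 - u) * cos (t * u) = (1 - cos t) / t ^ 2 := by
  have deriv (u : ℝ) : HasDerivAt (fun u => (1 - u) * (sin (t * u) / t) - cos (t * u) / t ^ 2)
      ((1 - u) * cos (t * u)) u := by
    have linear : HasDerivAt (fun u => t * u) t u := by
      simpa using (hasDerivAt_id u).const_mul t
    refine ((((hasDerivAt_id u).const_sub 1).mul (linear.sin.div_const t)).sub
      (linear.cos.div_const (t ^ 2))).congr_deriv ?_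
    simp only [id]
    field_simp
    ring
  rw [intervalIntegral.integral_eq_sub_of_hasDerivAt (fun u _ => deriv u)
    (Continuous.intervalIntegrable (by fun_prop) _ _)]
  simp only [sub_self, zero_mul, mul_zero, mul_one, sin_zero, cos_zero, zero_div]
  ring

lemma integral_triangle_mul_cexp {t : ℝ} (ht : t ≠ 0) :
    ∫ u : ℝ, (triangle u : ℂ) * Complex.exp (Complex.I * u * t)
      = ((2 * ((1 - cos t) / t ^ 2) : ℝ) : ℂ) := by
  have triangle_abs (u : ℝ) : triangle |u| = triangle u := by simp only [triangle, abs_abs]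
  have even := integral_comp_abs_mul_cexp (g := triangle)
    (by simpa only [triangle_abs] using integrable_triangle) t
  simp only [triangle_abs] at even
  rw [even, ← integral_one_sub_mul_cos ht, intervalIntegral.integral_of_le zero_le_one,
    setIntegral_eq_of_subset_of_forall_sdiff_eq_zero measurableSet_Ioi
      (Ioc_subset_Ioi_self : Ioc (0 : ℝ) 1 ⊆ Ioi 0)]
  · congr 2
    refine setIntegral_congr_fun measurableSet_Ioc fun u hu => ?_
    have hu_abs : |u| = u := abs_of_pos hu.1
    simp only [triangle_eq_one_sub_abs (hu_abs.trans_le hu.2), hu_abs]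
  · rintro u ⟨hu_pos, hu_notMem⟩
    have one_le : 1 ≤ |u| := (not_le.1 fun h => hu_notMem ⟨hu_pos, h⟩).le.trans (le_abs_self u)
    rw [triangle_eq_zero one_le, zero_mul]

/-- The Pólya kernel `r ↦ ∫₀^∞ max 0 (1 - |r| / x) f(x) dx` of a density `f` on `(0, ∞)`; the
values of `f` on `(-∞, 0]` are ignored. -/
noncomputable def polyaKernel (f : ℝ → ℝ) (r : ℝ) : ℝ :=
  ∫ x in Ioi 0, triangle (r / x) * f x

theorem integral_polyaKernel_mul_cexp {f : ℝ → ℝ}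
    (hf : IntegrableOn (fun x => x * f x) (Ioi 0)) {t : ℝ} (ht : t ≠ 0) :
    ∫ r : ℝ, (polyaKernel f r : ℂ) * Complex.exp (Complex.I * r * t)
      = ((2 / t ^ 2 * ∫ x in Ioi 0, (1 - cos (t * x)) / x * f x : ℝ) : ℂ) := by
  have hf_complex : IntegrableOn (fun x : ℝ => (x : ℂ) * (f x : ℂ)) (Ioi 0) := by
    simp only [← Complex.ofReal_mul]
    exact Integrable.ofReal hf
  calc ∫ r : ℝ, (polyaKernel f r : ℂ) * Complex.exp (Complex.I * r * t)
      = ∫ r : ℝ, (∫ x in Ioi (0 : ℝ), (triangle (r / x) : ℂ) * f x)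
          * Complex.exp (Complex.I * r * t) := by
        simp only [polyaKernel, ← integral_complex_ofReal, Complex.ofReal_mul]
    _ = ∫ x in Ioi (0 : ℝ),
          (x * f x : ℂ) * ∫ u : ℝ, triangle u * Complex.exp (Complex.I * u * (x * t : ℝ)) :=
        integral_scale_mixture_mul_cexp (φ := fun u => (triangle u : ℂ)) (f := fun x => (f x : ℂ))
          (Complex.continuous_ofReal.comp continuous_triangle).measurable
          integrable_triangle.ofReal hf_complex t
    _ = ∫ x in Ioi (0 : ℝ), ((2 / t ^ 2 * ((1 - cos (t * x)) / x * f x) : ℝ) : ℂ) := by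
        refine setIntegral_congr_fun measurableSet_Ioi fun x hx => ?_
        have hx_ne : x ≠ 0 := ne_of_gt hx
        rw [integral_triangle_mul_cexp (mul_ne_zero hx_ne ht), mul_comm x t,
          ← Complex.ofReal_mul, ← Complex.ofReal_mul]
        congr 1
        field_simp
    _ = ((2 / t ^ 2 * ∫ x in Ioi 0, (1 - cos (t * x)) / x * f x : ℝ) : ℂ) := by
        rw [integral_complex_ofReal, integral_const_mul]

/-- The density of the Rayleigh distribution of scale `σ` on `(0, ∞)`, given by the same formula
(rather than by `0`) on `(-∞, 0]`. -/
noncomputable def rayleighDensity (σ x : ℝ) : ℝ := x / σ ^ 2 * exp (-(x ^ 2 / (2 * σ ^ 2)))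

section Rayleigh

variable {σ : ℝ}

lemma integrable_exp_neg_sq_div (hσ : σ ≠ 0) :
    Integrable fun x : ℝ => exp (-(x ^ 2 / (2 * σ ^ 2))) := by
  have hb : 0 < (2 * σ ^ 2)⁻¹ := by positivity
  refine (integrable_exp_neg_mul_sq hb).congr (.of_forall fun x => ?_)
  ring_nf

lemma integrable_rayleighDensity (hσ : σ ≠ 0) : Integrable (rayleighDensity σ) := by
  have hb : 0 < (2 * σ ^ 2)⁻¹ := by positivity
  refine ((integrable_mul_exp_neg_mul_sq hb).const_mul (σ ^ 2)⁻¹).congr (.of_forall fun x => ?_)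
  simp only [rayleighDensity]
  ring_nf

lemma integrable_mul_rayleighDensity (hσ : σ ≠ 0) :
    Integrable fun x => x * rayleighDensity σ x := by
  have hb : 0 < (2 * σ ^ 2)⁻¹ := by positivity
  have second_moment : Integrable fun x : ℝ => x ^ 2 * exp (-(2 * σ ^ 2)⁻¹ * x ^ 2) := by
    simpa only [rpow_two] using integrable_rpow_mul_exp_neg_mul_sq hb (s := 2) (by norm_num)
  refine (second_moment.const_mul (σ ^ 2)⁻¹).congr (.of_forall fun x => ?_)
  simp only [rayleighDensity]
  ring_nf

lemma integral_rayleighDensity_Ioi (hσ : σ ≠ 0) (a : ℝ) :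
    ∫ x in Ioi a, rayleighDensity σ x = exp (-(a ^ 2 / (2 * σ ^ 2))) := by
  have deriv (x : ℝ) : HasDerivAt (fun x => -exp (-(x ^ 2 / (2 * σ ^ 2))))
      (rayleighDensity σ x) x := by
    refine (((hasDerivAt_pow 2 x).div_const (2 * σ ^ 2)).fun_neg.exp.fun_neg).congr_deriv ?_
    rw [rayleighDensity, Nat.cast_two, pow_one]
    field_simp
  have decay : Filter.Tendsto (fun x => -exp (-(x ^ 2 / (2 * σ ^ 2)))) Filter.atTop (nhds 0) := by
    have quadratic : Filter.Tendsto (fun x : ℝ => x ^ 2 / (2 * σ ^ 2)) Filter.atTop Filter.atTop :=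
      (Filter.tendsto_pow_atTop two_ne_zero).atTop_div_const (by positivity)
    simpa using (tendsto_exp_neg_atTop_nhds_zero.comp quadratic).neg
  rw [integral_Ioi_of_hasDerivAt_of_tendsto' (fun x _ => deriv x)
    (integrable_rayleighDensity hσ).integrableOn decay, zero_sub, neg_neg]

lemma integral_exp_neg_sq_div_Ioi (hσ : 0 < σ) (a : ℝ) :
    ∫ x in Ioi a, exp (-(x ^ 2 / (2 * σ ^ 2))) = σ * √2 * (√π / 2 * erfc (a / (σ * √2))) := by
  have hc : 0 < σ * √2 := by positivity
  have scale := integral_comp_mul_left_Ioi (fun u => exp (-u ^ 2)) a (inv_pos.2 hc)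
  rw [inv_inv, inv_mul_eq_div, smul_eq_mul] at scale
  have rescaled_sq (x : ℝ) : ((σ * √2)⁻¹ * x) ^ 2 = x ^ 2 / (2 * σ ^ 2) := by
    rw [inv_mul_eq_div, div_pow, mul_pow, sq_sqrt zero_le_two, mul_comm (σ ^ 2)]
  simp only [rescaled_sq] at scale
  rw [scale, erfc]
  field_simp

theorem polyaKernel_rayleighDensity (hσ : 0 < σ) (r : ℝ) :
    polyaKernel (rayleighDensity σ) r = exp (-(r ^ 2 / (2 * σ ^ 2)))
      - √π * (|r| / (σ * √2)) * erfc (|r| / (σ * √2)) := by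
  have integrand_eq_zero : ∀ x ∈ Ioi 0 \ Ioi |r|, triangle (r / x) * rayleighDensity σ x = 0 := by
    rintro x ⟨hx_pos, hx_notMem⟩
    have one_le : 1 ≤ |r / x| := by
      rw [abs_div, abs_of_pos (mem_Ioi.1 hx_pos), one_le_div hx_pos]
      exact not_lt.1 hx_notMem
    rw [triangle_eq_zero one_le, zero_mul]
  have integrand_eq : ∀ x ∈ Ioi |r|, triangle (r / x) * rayleighDensity σ x
      = rayleighDensity σ x - |r| / σ ^ 2 * exp (-(x ^ 2 / (2 * σ ^ 2))) := by
    intro x hx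
    have hx_pos : 0 < x := (abs_nonneg r).trans_lt hx
    have abs_ratio : |r / x| = |r| / x := by rw [abs_div, abs_of_pos hx_pos]
    rw [triangle_eq_one_sub_abs (abs_ratio.trans_le ((div_le_one hx_pos).2 (le_of_lt hx))),
      abs_ratio, rayleighDensity]
    field_simp
  calc polyaKernel (rayleighDensity σ) r
      = ∫ x in Ioi |r|, triangle (r / x) * rayleighDensity σ x :=
        setIntegral_eq_of_subset_of_forall_sdiff_eq_zero measurableSet_Ioi
          (Ioi_subset_Ioi (abs_nonneg r)) integrand_eq_zero
    _ = ∫ x in Ioi |r|, (rayleighDensity σ x - |r| / σ ^ 2 * exp (-(x ^ 2 / (2 * σ ^ 2)))) :=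
        setIntegral_congr_fun measurableSet_Ioi integrand_eq
    _ = exp (-(|r| ^ 2 / (2 * σ ^ 2)))
          - |r| / σ ^ 2 * (σ * √2 * (√π / 2 * erfc (|r| / (σ * √2)))) := by
        rw [integral_sub (integrable_rayleighDensity hσ.ne').integrableOn
            ((integrable_exp_neg_sq_div hσ.ne').const_mul _).integrableOn,
          integral_const_mul, integral_rayleighDensity_Ioi hσ.ne',
          integral_exp_neg_sq_div_Ioi hσ]
    _ = exp (-(r ^ 2 / (2 * σ ^ 2))) - √π * (|r| / (σ * √2)) * erfc (|r| / (σ * √2)) := by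
        rw [sq_abs]
        field_simp
        linear_combination -(|r| * √π * erfc (|r| / (σ * √2))) * sq_sqrt (zero_le_two (α := ℝ))

lemma integral_one_sub_cos_div_mul_rayleighDensity (hσ : 0 < σ) (t : ℝ) :
    ∫ x in Ioi 0, (1 - cos (t * x)) / x * rayleighDensity σ x
      = √(2 * π) / (2 * σ) * (1 - exp (-(σ ^ 2 * t ^ 2 / 2))) := by
  have hb : 0 < (2 * σ ^ 2)⁻¹ := by positivity
  have gaussian_integrable : IntegrableOn (fun x : ℝ => exp (-(2 * σ ^ 2)⁻¹ * x ^ 2)) (Ioi 0) :=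
    (integrable_exp_neg_mul_sq hb).integrableOn
  have sqrt_eq : √(π / (2 * σ ^ 2)⁻¹) = σ * √(2 * π) := by
    rw [div_inv_eq_mul, show π * (2 * σ ^ 2) = σ ^ 2 * (2 * π) by ring,
      sqrt_mul (sq_nonneg σ), sqrt_sq hσ.le]
  calc ∫ x in Ioi 0, (1 - cos (t * x)) / x * rayleighDensity σ x
      = ∫ x in Ioi 0, (σ ^ 2)⁻¹ * (exp (-(2 * σ ^ 2)⁻¹ * x ^ 2)
          - exp (-(2 * σ ^ 2)⁻¹ * x ^ 2) * cos (t * x)) := by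
        refine setIntegral_congr_fun measurableSet_Ioi fun x hx => ?_
        have hx_ne : x ≠ 0 := ne_of_gt hx
        simp only [rayleighDensity, neg_mul, inv_mul_eq_div]
        field_simp
    _ = (σ ^ 2)⁻¹ * (√(π / (2 * σ ^ 2)⁻¹) / 2
          - √(π / (2 * σ ^ 2)⁻¹) / 2 * exp (-(t ^ 2 / (4 * (2 * σ ^ 2)⁻¹)))) := by
        rw [integral_const_mul, integral_sub gaussian_integrable
            (gaussian_integrable.mul_bdd (c := 1)
              (by fun_prop : Continuous _).aestronglyMeasurable
              (.of_forall fun x => abs_cos_le_one _)),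
          integral_gaussian_Ioi, integral_exp_neg_mul_sq_mul_cos_Ioi hb]
    _ = √(2 * π) / (2 * σ) * (1 - exp (-(σ ^ 2 * t ^ 2 / 2))) := by
        rw [sqrt_eq, show t ^ 2 / (4 * (2 * σ ^ 2)⁻¹) = σ ^ 2 * t ^ 2 / 2 by field_simp; ring]
        field_simp

end Rayleigh

/-- Equation (19): the Fourier transform of the Polya kernel constructed from the
Rayleigh distribution with scale `σ`, namely
`k(r) = e^{-r²/(2σ²)} - √π (|r|/(σ√2)) erfc(|r|/(σ√2))`, equals
`(√(2π)/(σt²))(1 - e^{-σ²t²/2})` for `t ≠ 0`. -/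
theorem polya_kernel_rayleigh_fourier (σ : ℝ) (hσ : 0 < σ)
    (k : ℝ → ℝ)
    (hk : ∀ r : ℝ,
      k r = Real.exp (-(r ^ 2 / (2 * σ ^ 2)))
        - Real.sqrt π * (|r| / (σ * Real.sqrt 2)) * erfc (|r| / (σ * Real.sqrt 2)))
    (t : ℝ) (ht : t ≠ 0) :
    ∫ r : ℝ, (k r : ℂ) * Complex.exp (Complex.I * r * t)
      = ((Real.sqrt (2 * π) / (σ * t ^ 2) * (1 - Real.exp (-(σ ^ 2 * t ^ 2 / 2))) : ℝ) : ℂ) := by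
  have k_eq (r : ℝ) : k r = polyaKernel (rayleighDensity σ) r :=
    (hk r).trans (polyaKernel_rayleighDensity hσ r).symm
  have first_moment := (integrable_mul_rayleighDensity hσ.ne').integrableOn (s := Ioi 0)
  simp only [k_eq]
  rw [integral_polyaKernel_mul_cexp first_moment ht,
    integral_one_sub_cos_div_mul_rayleighDensity hσ]
  congr 1
  field_simp
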